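/- arXiv:2605.04091 — 3 statements merged into one kernel-verified Lean document; each statement's English description precedes it below -/
import Mathlib

section
/- Let (Ω, 𝔽, ℙ) be a probability space and let o_t : Ω → ℝ, t ∈ ℕ, be integrable random variables taking values in {0,1} with 𝔼[o_t] = p̃ for all t, for some p̃ ∈ [0,1]. Define the discounted Beta counts α_0 = β_0 = 1, α_{t+1} = λ·α_t + o_t, β_{t+1} = λ·β_t + (1 − o_t) with aging factor λ ∈ (0,1], and the reputation r_T = α_T/(α_T + β_T). Then for every T ∈ ℕ, 𝔼[r_T] = (λ^T + p̃ · ∑_{s=0}^{T−1} λ^s) / (2·λ^T + ∑_{s=0}^{T−1} λ^s). -/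
/-!
The total `α T + β T` does not depend on the outcomes: each round multiplies it by `lam` and adds
`o + (1 - o) = 1`, so it equals `2 * lam ^ T + ∑ s < T, lam ^ s` pointwise. Hence `r T` is `α T`
divided by a constant, and by linearity of the integral `𝔼[α T]` satisfies the recursion
`a (t + 1) = lam * a t + p`, whose solution with `a 0 = 1` is `lam ^ T + p * ∑ s < T, lam ^ s`.
Both recursions close by `∑ s < t + 1, lam ^ s = lam * ∑ s < t, lam ^ s + 1`.
-/

open Finset MeasureTheory

/-- For `{0,1}`-valued integrable outcomes with common mean `p̃` and `λ ∈ (0,1]`,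
the discounted Beta reputation `r T = α T / (α T + β T)` satisfies
`𝔼[r T] = (λ^T + p̃ ∑_{s<T} λ^s) / (2 λ^T + ∑_{s<T} λ^s)`. -/
theorem discounted_beta_expected_reputation
    {Ω : Type*} [MeasurableSpace Ω] (μ : Measure Ω) [IsProbabilityMeasure μ]
    (lam : ℝ) (hlam : lam ∈ Set.Ioc (0 : ℝ) 1)
    (p : ℝ) (hp : p ∈ Set.Icc (0 : ℝ) 1)
    (o : ℕ → Ω → ℝ)
    (ho_int : ∀ t, Integrable (o t) μ)
    (ho01 : ∀ t ω, o t ω = 0 ∨ o t ω = 1)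
    (ho_mean : ∀ t, ∫ ω, o t ω ∂μ = p)
    (α β : ℕ → Ω → ℝ)
    (hα0 : ∀ ω, α 0 ω = 1) (hβ0 : ∀ ω, β 0 ω = 1)
    (hα : ∀ t ω, α (t + 1) ω = lam * α t ω + o t ω)
    (hβ : ∀ t ω, β (t + 1) ω = lam * β t ω + (1 - o t ω))
    (r : ℕ → Ω → ℝ)
    (hr : ∀ t ω, r t ω = α t ω / (α t ω + β t ω))
    (T : ℕ) :
    (∫ ω, r T ω ∂μ) =
      (lam ^ T + p * ∑ s ∈ Finset.range T, lam ^ s) /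
        (2 * lam ^ T + ∑ s ∈ Finset.range T, lam ^ s) := by
  have hsum : ∀ t ω, α t ω + β t ω = 2 * lam ^ t + ∑ s ∈ Finset.range t, lam ^ s := by
    intro t ω
    induction t with
    | zero => rw [hα0, hβ0]; norm_num
    | succ t ih =>
      rw [hα, hβ, geom_sum_succ]
      linear_combination lam * ih
  have hmean : ∀ t, Integrable (α t) μ ∧
      ∫ ω, α t ω ∂μ = lam ^ t + p * ∑ s ∈ Finset.range t, lam ^ s := by
    intro t
    induction t with
    | zero =>
      have h0 : α 0 = fun _ => 1 := funext hα0
      rw [h0]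
      exact ⟨integrable_const _, by simp⟩
    | succ t ih =>
      obtain ⟨hint, hval⟩ := ih
      have hs : α (t + 1) = fun ω => lam * α t ω + o t ω := funext (hα t)
      rw [hs]
      refine ⟨(hint.const_mul lam).add (ho_int t), ?_⟩
      rw [integral_add (hint.const_mul lam) (ho_int t), integral_const_mul, hval, ho_mean,
        geom_sum_succ]
      ring
  simp only [hr, hsum]
  rw [integral_div, (hmean T).2]
end

section
/- (Expected Separation Under Stylized Adjudication.) Let (Ω, 𝔽, ℙ) be a probability space, let λ ∈ (0,1], and let h_t, b_t : Ω → ℝ, t ∈ ℕ, be integrable {0,1}-valued random variables with 𝔼[h_t] = p̃_h and 𝔼[b_t] = p̃_b for all t, where p̃_h, p̃_b ∈ [0,1] with p̃_h > p̃_b. Let r_h^{(T)} and r_b^{(T)} be the reputations obtained from the discounted Beta updates driven by (h_t) and (b_t) respectively, each initialized at α_0 = β_0 = 1. Then for every T ∈ ℕ, 𝔼[r_h^{(T)} − r_b^{(T)}] = (p̃_h − p̃_b) · (∑_{s=0}^{T−1} λ^s) / (2·λ^T + ∑_{s=0}^{T−1} λ^s). -/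
/-!
After discounting by `λ`, the total evidence `α_T + β_T` gains exactly one unit in every round
whatever the outcome, so it is the deterministic number `2 λ^T + ∑_{s<T} λ^s`
(`evidence_total`). Hence the reputation is `α_T` divided by a constant, and its expectation
follows from that of `α_T`, which the linear recursion gives as `λ^T + p ∑_{s<T} λ^s`
(`positive_evidence_integral`). The initial terms `λ^T` cancel in the difference.
-/

open Finset MeasureTheory

lemma evidence_total {Ω : Type*} (lam : ℝ) (o α β : ℕ → Ω → ℝ)
    (hα0 : ∀ ω, α 0 ω = 1) (hβ0 : ∀ ω, β 0 ω = 1)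
    (hα : ∀ t ω, α (t + 1) ω = lam * α t ω + o t ω)
    (hβ : ∀ t ω, β (t + 1) ω = lam * β t ω + (1 - o t ω)) (T : ℕ) (ω : Ω) :
    α T ω + β T ω = 2 * lam ^ T + ∑ s ∈ Finset.range T, lam ^ s := by
  induction T with
  | zero => norm_num [hα0, hβ0]
  | succ n ih =>
    rw [hα, hβ, geom_sum_succ, pow_succ]
    linear_combination lam * ih

lemma positive_evidence_integral {Ω : Type*} [MeasurableSpace Ω] (μ : Measure Ω)
    [IsProbabilityMeasure μ] (lam p : ℝ) (o α : ℕ → Ω → ℝ)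
    (ho_int : ∀ t, Integrable (o t) μ) (ho_mean : ∀ t, ∫ ω, o t ω ∂μ = p)
    (hα0 : ∀ ω, α 0 ω = 1) (hα : ∀ t ω, α (t + 1) ω = lam * α t ω + o t ω) (T : ℕ) :
    Integrable (α T) μ ∧
      ∫ ω, α T ω ∂μ = lam ^ T + p * ∑ s ∈ Finset.range T, lam ^ s := by
  induction T with
  | zero =>
    have h0 : α 0 = fun _ => 1 := funext hα0
    rw [h0]
    exact ⟨integrable_const _, by simp⟩
  | succ n ih =>
    obtain ⟨hi, he⟩ := ih
    have h1 : α (n + 1) = fun ω => lam * α n ω + o n ω := funext (hα n)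
    rw [h1]
    refine ⟨(hi.const_mul lam).add (ho_int n), ?_⟩
    rw [integral_add (hi.const_mul lam) (ho_int n), integral_const_mul, he, ho_mean,
      geom_sum_succ, pow_succ]
    ring

/-- Expected Separation Under Stylized Adjudication: with `λ ∈ (0,1]` and `{0,1}`-valued
integrable honest outcomes `h t` (mean `p̃_h`) and Byzantine outcomes `b t` (mean `p̃_b`)
with `p̃_h > p̃_b`, the discounted Beta reputations satisfy
`𝔼[r_h T - r_b T] = (p̃_h - p̃_b) · (∑_{s<T} λ^s) / (2 λ^T + ∑_{s<T} λ^s)`. -/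
theorem expected_reputation_separation
    {Ω : Type*} [MeasurableSpace Ω] (μ : Measure Ω) [IsProbabilityMeasure μ]
    (lam : ℝ) (hlam : lam ∈ Set.Ioc (0 : ℝ) 1)
    (ph pb : ℝ) (hph : ph ∈ Set.Icc (0 : ℝ) 1) (hpb : pb ∈ Set.Icc (0 : ℝ) 1)
    (hsep : pb < ph)
    (h b : ℕ → Ω → ℝ)
    (hh_int : ∀ t, Integrable (h t) μ) (hb_int : ∀ t, Integrable (b t) μ)
    (hh01 : ∀ t ω, h t ω = 0 ∨ h t ω = 1) (hb01 : ∀ t ω, b t ω = 0 ∨ b t ω = 1)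
    (hh_mean : ∀ t, ∫ ω, h t ω ∂μ = ph) (hb_mean : ∀ t, ∫ ω, b t ω ∂μ = pb)
    (αh βh αb βb : ℕ → Ω → ℝ)
    (hαh0 : ∀ ω, αh 0 ω = 1) (hβh0 : ∀ ω, βh 0 ω = 1)
    (hαb0 : ∀ ω, αb 0 ω = 1) (hβb0 : ∀ ω, βb 0 ω = 1)
    (hαh : ∀ t ω, αh (t + 1) ω = lam * αh t ω + h t ω)
    (hβh : ∀ t ω, βh (t + 1) ω = lam * βh t ω + (1 - h t ω))
    (hαb : ∀ t ω, αb (t + 1) ω = lam * αb t ω + b t ω)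
    (hβb : ∀ t ω, βb (t + 1) ω = lam * βb t ω + (1 - b t ω))
    (rh rb : ℕ → Ω → ℝ)
    (hrh : ∀ t ω, rh t ω = αh t ω / (αh t ω + βh t ω))
    (hrb : ∀ t ω, rb t ω = αb t ω / (αb t ω + βb t ω))
    (T : ℕ) :
    (∫ ω, (rh T ω - rb T ω) ∂μ) =
      (ph - pb) * ((∑ s ∈ Finset.range T, lam ^ s) /
        (2 * lam ^ T + ∑ s ∈ Finset.range T, lam ^ s)) := by
  obtain ⟨hhi, hhe⟩ := positive_evidence_integral μ lam ph h αh hh_int hh_mean hαh0 hαh T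
  obtain ⟨hbi, hbe⟩ := positive_evidence_integral μ lam pb b αb hb_int hb_mean hαb0 hαb T
  simp only [hrh, hrb, evidence_total lam h αh βh hαh0 hβh0 hαh hβh,
    evidence_total lam b αb βb hαb0 hβb0 hαb hβb]
  rw [integral_sub (hhi.div_const _) (hbi.div_const _), integral_div, integral_div, hhe, hbe]
  ring
end

section
/- For all η ∈ [0, 1/2] and ρ ∈ [0, 1], the following algebraic inequality holds: ρ·η + (1−ρ)·(3η² − 2η³) ≤ η + ρ·η·(1−η)·(2/3). Here the left-hand side is the majority-vote error probability of three evaluators in the common-bit equicorrelated mixture model (with probability ρ all three evaluators copy one common Bernoulli(η) error bit, otherwise they err independently with probability η), and the right-hand side is the paper's effective error bound η_eff(ρ) for m = 3. -/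
/-- For all `η ∈ [0,1/2]` and `ρ ∈ [0,1]`, the majority-vote error probability of
three evaluators in the common-bit equicorrelated mixture model,
`ρη + (1-ρ)(3η² - 2η³)`, is bounded by the effective error bound
`η + ρ·η(1-η)·(2/3)` for `m = 3`. -/
theorem correlated_majority_error_bound
    (η ρ : ℝ) (hη : η ∈ Set.Icc (0 : ℝ) (1 / 2)) (hρ : ρ ∈ Set.Icc (0 : ℝ) 1) :
    ρ * η + (1 - ρ) * (3 * η ^ 2 - 2 * η ^ 3) ≤
      η + ρ * η * (1 - η) * (2 / 3) := by
  obtain ⟨h0, h1⟩ := hη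
  obtain ⟨r0, r1⟩ := hρ
  have a : 0 ≤ 1 - η := by linarith
  have b : 0 ≤ 1 - 2 * η := by linarith
  have c : 0 ≤ 1 - ρ := by linarith
  -- Since `η - (3η² - 2η³) = η(1-η)(1-2η)`, the two terms below sum to the right side minus the left.
  have p : 0 ≤ (1 - ρ) * (η * (1 - η) * (1 - 2 * η)) := by positivity
  have q : 0 ≤ ρ * η * (1 - η) * (2 / 3) := by positivity
  linarith
end
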